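/- Let n, d be integers with d ≥ 3 and n ≥ 1, and let A ⊆ [2^n]^d satisfy Vol(A) ≤ 1/2. Then Vol(A)^{1−1/d} ≤ 2d·Per(A). -/

import Mathlib

open MeasureTheory Finset

noncomputable section

/-- Points of the grid `[2^n]^d` (coordinates taken 0-based). -/
abbrev GridPt (n d : ℕ) := Fin d → Fin (2^n)

/-- Normalized counting "volume" of a subset of the grid: `Vol(A) = 2^{-nd}|A|`. -/
def Vol (n d : ℕ) (A : Finset (GridPt n d)) : ℝ := (A.card : ℝ) / 2^(n*d)

/-- The ℓ1 metric on the grid. -/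
def gdist {n d : ℕ} (u v : GridPt n d) : ℝ := ∑ i, |((u i : ℕ) : ℝ) - ((v i : ℕ) : ℝ)|

/-- Ordered edges of the grid graph (each unordered edge `{u, u+e_i}` listed exactly once,
in the increasing direction). -/
def edgePairs (n d : ℕ) : Finset (GridPt n d × GridPt n d) :=
  Finset.univ.filter (fun e =>
    ∃ i, ((e.2 i : ℕ) = (e.1 i : ℕ) + 1) ∧ ∀ j, j ≠ i → e.2 j = e.1 j)

/-- The edge boundary `∂A` of a subset `A` of the grid. -/
def bdry (n d : ℕ) (A : Finset (GridPt n d)) : Finset (GridPt n d × GridPt n d) :=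
  (edgePairs n d).filter (fun e => (e.1 ∈ A ∧ e.2 ∉ A) ∨ (e.1 ∉ A ∧ e.2 ∈ A))

/-- The normalized perimeter `Per(A) = (1/d)·2^{-n(d-1)}·|∂A|`. -/
def Per (n d : ℕ) (A : Finset (GridPt n d)) : ℝ :=
  (1/(d:ℝ)) * ((2:ℝ)^(n*(d-1)))⁻¹ * ((bdry n d A).card : ℝ)

/-!
Project `A ⊆ [N]^d` along each coordinate direction. A line that meets `A` either lies entirely in
`A`, and then uses up `N` points of `A`, or contains a boundary edge in its own direction. Writing
`v` for the density of `A`, this bounds the sum of the `d` projections by `d v N ^ (d - 1) + |∂A|`.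
By Loomis–Whitney and AM–GM the same sum is at least `d |A| ^ (1 - 1 / d)`, so
`d (v ^ (1 - 1 / d) - v) ≤ |∂A| / N ^ (d - 1)`. When `v ≤ 1 / 2`, Bernoulli's inequality
`v ^ (1 / d) ≤ 1 - 1 / (2 d)` shows that the left side is at least `v ^ (1 - 1 / d) / 2`.
-/

lemma sum_prod_rpow_le_prod_sum_rpow {ι τ : Type*} (s : Finset τ) (u : Finset ι)
    (f : ι → τ → ENNReal) {w : ι → ℝ} (hw : ∀ i ∈ u, 0 ≤ w i) (hw_sum : ∑ i ∈ u, w i = 1) :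
    ∑ t ∈ s, ∏ i ∈ u, f i t ^ w i ≤ ∏ i ∈ u, (∑ t ∈ s, f i t) ^ w i := by
  let _ : MeasurableSpace τ := ⊤
  simpa only [lintegral_finset, Measure.count_singleton, mul_one] using
    ENNReal.lintegral_prod_norm_pow_le (μ := Measure.count.restrict (s : Set τ)) u
      (fun i _ => (measurable_from_top (f := f i)).aemeasurable) hw_sum hw

-- Hölder's inequality with the roots cleared, so that it can be applied to cardinalities.
lemma sum_pow_card_le_mul_prod_sum {ι τ : Type*} [Fintype ι] [Nonempty ι] (s : Finset τ)
    (a : τ → ENNReal) (b : ι → τ → ENNReal) (c : ENNReal)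
    (h : ∀ t ∈ s, a t ^ Fintype.card ι ≤ c * ∏ i, b i t) :
    (∑ t ∈ s, a t) ^ Fintype.card ι ≤ c * ∏ i, ∑ t ∈ s, b i t := by
  set k := Fintype.card ι
  have hroot_nonneg : 0 ≤ (k : ℝ)⁻¹ := by positivity
  have hroot : ∀ t ∈ s, a t ≤ c ^ (k : ℝ)⁻¹ * ∏ i, b i t ^ (k : ℝ)⁻¹ := fun t ht => by
    rw [ENNReal.prod_rpow_of_nonneg hroot_nonneg, ← ENNReal.mul_rpow_of_nonneg _ _ hroot_nonneg,
      ENNReal.le_rpow_inv_iff (by positivity), ENNReal.rpow_natCast]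
    exact h t ht
  have hsum : ∑ t ∈ s, a t ≤ (c * ∏ i, ∑ t ∈ s, b i t) ^ (k : ℝ)⁻¹ :=
    calc ∑ t ∈ s, a t
        ≤ ∑ t ∈ s, c ^ (k : ℝ)⁻¹ * ∏ i, b i t ^ (k : ℝ)⁻¹ := sum_le_sum hroot
      _ ≤ c ^ (k : ℝ)⁻¹ * ∏ i, (∑ t ∈ s, b i t) ^ (k : ℝ)⁻¹ := by
          rw [← mul_sum]
          gcongr
          exact sum_prod_rpow_le_prod_sum_rpow s univ b (fun _ _ => hroot_nonneg)
            (by simp [k])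
      _ = (c * ∏ i, ∑ t ∈ s, b i t) ^ (k : ℝ)⁻¹ := by
          rw [ENNReal.prod_rpow_of_nonneg hroot_nonneg, ENNReal.mul_rpow_of_nonneg _ _ hroot_nonneg]
  rwa [ENNReal.le_rpow_inv_iff (by positivity), ENNReal.rpow_natCast] at hsum

section LoomisWhitney

variable {α : Type*} [DecidableEq α] {d : ℕ}

/-- The slice `{y | (t, y) ∈ A}` of a set of tuples, used to induct on the dimension. It is encoded
as an image so that it exists over infinite alphabets. -/
def headSlice (A : Finset (Fin (d + 1) → α)) (t : α) : Finset (Fin d → α) :=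
  {x ∈ A | x 0 = t}.image Fin.tail

lemma mem_headSlice {A : Finset (Fin (d + 1) → α)} {t : α} {y : Fin d → α} :
    y ∈ headSlice A t ↔ (Fin.cons t y : Fin (d + 1) → α) ∈ A := by
  simp only [headSlice, mem_image, mem_filter]
  constructor
  · rintro ⟨x, ⟨hx, rfl⟩, rfl⟩
    rwa [Fin.cons_self_tail]
  · exact fun h => ⟨_, ⟨h, rfl⟩, Fin.tail_cons (α := fun _ => α) t y⟩

lemma sum_card_headSlice (A : Finset (Fin (d + 1) → α)) :
    ∑ t ∈ A.image (· 0), #(headSlice A t) = #A := by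
  rw [card_eq_sum_card_image (· 0) A]
  refine sum_congr rfl fun t _ => card_image_of_injOn fun x hx y hy hxy => ?_
  simp only [coe_filter, Set.mem_ofPred_eq] at hx hy
  rw [← Fin.cons_self_tail x, ← Fin.cons_self_tail y, hx.2, hy.2, hxy]

lemma headSlice_subset_image_removeNth_zero (A : Finset (Fin (d + 1) → α)) (t : α) :
    headSlice A t ⊆ A.image (Fin.removeNth 0) := fun y hy =>
  mem_image.2 ⟨Fin.cons t y, mem_headSlice.1 hy, by simp⟩

lemma image_removeNth_headSlice_subset (A : Finset (Fin (d + 2) → α)) (i : Fin (d + 1)) (t : α) :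
    (headSlice A t).image i.removeNth ⊆ headSlice (A.image i.succ.removeNth) t := by
  intro y hy
  obtain ⟨z, hz, rfl⟩ := mem_image.1 hy
  exact mem_headSlice.2 (mem_image.2 ⟨_, mem_headSlice.1 hz, Fin.cons_comp_succ_succAbove ..⟩)

lemma sum_card_image_removeNth_headSlice_le (A : Finset (Fin (d + 2) → α)) (i : Fin (d + 1)) :
    ∑ t ∈ A.image (· 0), #((headSlice A t).image i.removeNth) ≤ #(A.image i.succ.removeNth) := by
  have hheads : (A.image i.succ.removeNth).image (· 0) = A.image (· 0) := by
    rw [image_image]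
    rfl
  rw [← sum_card_headSlice (A.image i.succ.removeNth), hheads]
  exact sum_le_sum fun t _ => card_le_card (image_removeNth_headSlice_subset A i t)

theorem loomis_whitney (A : Finset (Fin (d + 1) → α)) (hA : A.Nonempty) :
    #A ^ d ≤ ∏ i : Fin (d + 1), #(A.image i.removeNth) := by
  induction d with
  | zero => simpa using hA
  | succ d ih =>
    have hslice : ∀ t ∈ A.image (· 0), #(headSlice A t) ^ (d + 1) ≤
        #(A.image (Fin.removeNth 0)) * ∏ i : Fin (d + 1), #((headSlice A t).image i.removeNth) := by
      intro t ht
      obtain ⟨x, hx, rfl⟩ := mem_image.1 ht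
      have hne : (headSlice A (x 0)).Nonempty :=
        ⟨Fin.tail x, mem_headSlice.2 (by rwa [Fin.cons_self_tail])⟩
      rw [pow_succ']
      exact Nat.mul_le_mul (card_le_card (headSlice_subset_image_removeNth_zero A _)) (ih _ hne)
    have hsum : (∑ t ∈ A.image (· 0), #(headSlice A t)) ^ (d + 1) ≤ #(A.image (Fin.removeNth 0)) *
        ∏ i : Fin (d + 1), ∑ t ∈ A.image (· 0), #((headSlice A t).image i.removeNth) := by
      have := sum_pow_card_le_mul_prod_sum (A.image (· 0)) (fun t => (#(headSlice A t) : ENNReal))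
        (fun (i : Fin (d + 1)) t => (#((headSlice A t).image i.removeNth) : ENNReal))
        #(A.image (Fin.removeNth 0)) fun t ht => by
          rw [Fintype.card_fin]
          exact_mod_cast hslice t ht
      rw [Fintype.card_fin] at this
      exact_mod_cast this
    rw [sum_card_headSlice] at hsum
    rw [Fin.prod_univ_succ]
    refine hsum.trans (Nat.mul_le_mul_left _ (prod_le_prod' fun i _ => ?_))
    exact sum_card_image_removeNth_headSlice_le A i

theorem mul_card_rpow_le_sum_card_image_removeNth (hd : d ≠ 0)
    (A : Finset (Fin (d + 1) → α)) :
    ((d + 1 : ℕ) : ℝ) * (#A : ℝ) ^ (1 - 1 / ((d + 1 : ℕ) : ℝ)) ≤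
      ∑ i : Fin (d + 1), (#(A.image i.removeNth) : ℝ) := by
  set D : ℝ := ((d + 1 : ℕ) : ℝ) with hD
  have hDpos : 0 < D := by positivity
  have hlw : (#A : ℝ) ^ d ≤ ∏ i : Fin (d + 1), (#(A.image i.removeNth) : ℝ) := by
    rcases A.eq_empty_or_nonempty with rfl | hne
    · simp [hd]
    · exact_mod_cast loomis_whitney A hne
  have hexp : (d : ℝ) * D⁻¹ = 1 - 1 / D := by
    rw [hD]
    push_cast
    field_simp
    ring
  rw [← le_div_iff₀' hDpos]
  calc (#A : ℝ) ^ (1 - 1 / D)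
      = ((#A : ℝ) ^ d) ^ D⁻¹ := by
        rw [← hexp, Real.rpow_natCast_mul (Nat.cast_nonneg _)]
    _ ≤ (∏ i : Fin (d + 1), (#(A.image i.removeNth) : ℝ)) ^ D⁻¹ := by gcongr
    _ ≤ (∑ i : Fin (d + 1), (#(A.image i.removeNth) : ℝ)) / D := by
        have hweights : ∑ _i : Fin (d + 1), (1 : ℝ) = D := by simp [hD]
        simpa [hweights] using Real.geom_mean_le_arith_mean univ (fun _ => 1)
          (fun i : Fin (d + 1) => (#(A.image i.removeNth) : ℝ)) (by simp) (hweights ▸ hDpos)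
          (by simp)

end LoomisWhitney

section Grid

variable {N d : ℕ}

/-- The boundary edges of `A` in direction `i`, each listed once as a pair `(u, u + e_i)`; here the
grid `[N]^d` has an arbitrary side length `N`. -/
def directionalBoundary (i : Fin d) (A : Finset (Fin d → Fin N)) :
    Finset ((Fin d → Fin N) × (Fin d → Fin N)) :=
  {e | ((e.2 i : ℕ) = (e.1 i : ℕ) + 1 ∧ ∀ j, j ≠ i → e.2 j = e.1 j) ∧
    ((e.1 ∈ A ∧ e.2 ∉ A) ∨ (e.1 ∉ A ∧ e.2 ∈ A))}

/-- The edge boundary of `A` in the grid `[N]^d`: the version of `bdry` for arbitrary side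
length, assembled from the boundaries in the `d` directions. -/
def edgeBoundary (A : Finset (Fin d → Fin N)) :
    Finset ((Fin d → Fin N) × (Fin d → Fin N)) :=
  univ.biUnion fun i => directionalBoundary i A

lemma card_edgeBoundary (A : Finset (Fin d → Fin N)) :
    #(edgeBoundary A) = ∑ i, #(directionalBoundary i A) := by
  refine card_biUnion fun i _ j _ hij => disjoint_left.2 fun e hi hj => ?_
  simp only [directionalBoundary, mem_filter, mem_univ, true_and] at hi hj
  have := congrArg Fin.val (hj.1.2 i hij)
  omega

lemma exists_consecutive_mem_notMem {S : Set (Fin N)} {s t : Fin N}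
    (hs : s ∈ S) (ht : t ∉ S) :
    ∃ k l : Fin N, (l : ℕ) = k + 1 ∧ ((k ∈ S ∧ l ∉ S) ∨ (k ∉ S ∧ l ∈ S)) := by
  cases N with
  | zero => exact s.elim0
  | succ N =>
    obtain ⟨walk⟩ := (SimpleGraph.pathGraph_connected N).preconnected s t
    obtain ⟨dart, -, hfst, hsnd⟩ := walk.exists_boundary_dart S hs ht
    rcases SimpleGraph.pathGraph_adj.1 dart.adj with h | h
    · exact ⟨dart.fst, dart.snd, h.symm, Or.inl ⟨hfst, hsnd⟩⟩
    · exact ⟨dart.snd, dart.fst, h.symm, Or.inr ⟨hsnd, hfst⟩⟩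

lemma exists_mem_directionalBoundary_of_insertNth_notMem {i : Fin (d + 1)}
    {A : Finset (Fin (d + 1) → Fin N)} {p : Fin d → Fin N} {s t : Fin N}
    (hs : i.insertNth s p ∈ A) (ht : i.insertNth t p ∉ A) :
    ∃ e ∈ directionalBoundary i A, i.removeNth e.1 = p := by
  obtain ⟨k, l, hkl, hcross⟩ :=
    exists_consecutive_mem_notMem (S := {r | i.insertNth r p ∈ A}) hs ht
  refine ⟨(i.insertNth k p, i.insertNth l p), ?_, Fin.removeNth_insertNth ..⟩
  simp only [directionalBoundary, mem_filter, mem_univ, true_and, Fin.insertNth_apply_same]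
  refine ⟨⟨hkl, fun j hj => ?_⟩, hcross⟩
  obtain ⟨j, rfl⟩ := Fin.exists_succAbove_eq hj
  simp only [Fin.insertNth_apply_succAbove]

lemma side_le_card_fiber_add_mul_card_boundary_fiber {i : Fin (d + 1)}
    {A : Finset (Fin (d + 1) → Fin N)} {p : Fin d → Fin N} (hp : p ∈ A.image i.removeNth) :
    N ≤ #{x ∈ A | i.removeNth x = p} +
      N * #{e ∈ directionalBoundary i A | i.removeNth e.1 = p} := by
  by_cases hfull : ∀ t, i.insertNth t p ∈ A
  · refine le_add_right ?_
    calc N = #(univ.image fun t : Fin N => (i.insertNth t p : Fin (d + 1) → Fin N)) := by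
          rw [card_image_of_injective _ (Fin.insertNth_left_injective (α := fun _ => Fin N) p),
            card_fin]
      _ ≤ _ := card_le_card <| image_subset_iff.2 fun t _ => mem_filter.2
          ⟨hfull t, Fin.removeNth_insertNth ..⟩
  · push Not at hfull
    obtain ⟨t, ht⟩ := hfull
    obtain ⟨x, hx, rfl⟩ := mem_image.1 hp
    obtain ⟨e, he⟩ := exists_mem_directionalBoundary_of_insertNth_notMem (s := x i)
      (by rwa [Fin.insertNth_self_removeNth]) ht
    have hpos : 0 < #{e ∈ directionalBoundary i A | i.removeNth e.1 = i.removeNth x} :=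
      card_pos.2 ⟨e, mem_filter.2 he⟩
    exact le_add_left (Nat.le_mul_of_pos_right N hpos)

lemma mul_card_image_removeNth_le (i : Fin (d + 1)) (A : Finset (Fin (d + 1) → Fin N)) :
    N * #(A.image i.removeNth) ≤ #A + N * #(directionalBoundary i A) := by
  calc N * #(A.image i.removeNth)
      = ∑ _p ∈ A.image i.removeNth, N := by rw [sum_const, smul_eq_mul, mul_comm]
    _ ≤ ∑ p ∈ A.image i.removeNth, (#{x ∈ A | i.removeNth x = p} +
          N * #{e ∈ directionalBoundary i A | i.removeNth e.1 = p}) :=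
        sum_le_sum fun p hp => side_le_card_fiber_add_mul_card_boundary_fiber hp
    _ = #A + N * ∑ p ∈ A.image i.removeNth,
          #{e ∈ directionalBoundary i A | i.removeNth e.1 = p} := by
        rw [sum_add_distrib, ← card_eq_sum_card_image, mul_sum]
    _ ≤ #A + N * #(directionalBoundary i A) := by
        rw [sum_card_fiberwise_eq_card_filter]
        gcongr
        exact filter_subset ..

lemma mul_sum_card_image_removeNth_le (A : Finset (Fin (d + 1) → Fin N)) :
    N * ∑ i : Fin (d + 1), #(A.image i.removeNth) ≤ (d + 1) * #A + N * #(edgeBoundary A) := by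
  rw [card_edgeBoundary, mul_sum, mul_sum]
  calc ∑ i : Fin (d + 1), N * #(A.image i.removeNth)
      ≤ ∑ i : Fin (d + 1), (#A + N * #(directionalBoundary i A)) :=
        sum_le_sum fun i _ => mul_card_image_removeNth_le i A
    _ = _ := by simp [sum_add_distrib]

lemma cast_dens_eq_card_div_pow (A : Finset (Fin d → Fin N)) : (A.dens : ℝ) = #A / (N : ℝ) ^ d := by
  simp [nnratCast_dens]

lemma card_rpow_eq_dens_rpow_mul_pow (hN : 0 < N) (A : Finset (Fin (d + 1) → Fin N)) :
    (#A : ℝ) ^ (1 - 1 / ((d + 1 : ℕ) : ℝ)) =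
      (A.dens : ℝ) ^ (1 - 1 / ((d + 1 : ℕ) : ℝ)) * (N : ℝ) ^ d := by
  have hNpos : (0 : ℝ) < N := by exact_mod_cast hN
  have hcard : (#A : ℝ) = A.dens * (N : ℝ) ^ (d + 1) := by
    rw [cast_dens_eq_card_div_pow, div_mul_cancel₀ _ (by positivity)]
  have hexp : ((d + 1 : ℕ) : ℝ) * (1 - 1 / ((d + 1 : ℕ) : ℝ)) = d := by
    push_cast
    field_simp
    ring
  rw [hcard, Real.mul_rpow (by positivity) (by positivity), ← Real.rpow_natCast_mul hNpos.le, hexp,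
    Real.rpow_natCast]

theorem mul_dens_rpow_sub_dens_le (hN : 0 < N) (hd : d ≠ 0)
    (A : Finset (Fin (d + 1) → Fin N)) :
    ((d + 1 : ℕ) : ℝ) * ((A.dens : ℝ) ^ (1 - 1 / ((d + 1 : ℕ) : ℝ)) - A.dens) ≤
      #(edgeBoundary A) / (N : ℝ) ^ d := by
  have hNpos : (0 : ℝ) < N := by exact_mod_cast hN
  have hcard : (#A : ℝ) = N * (A.dens * (N : ℝ) ^ d) := by
    rw [cast_dens_eq_card_div_pow, pow_succ']
    field_simp
  have hlw := mul_card_rpow_le_sum_card_image_removeNth hd A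
  rw [card_rpow_eq_dens_rpow_mul_pow hN] at hlw
  have hproj : (∑ i : Fin (d + 1), (#(A.image i.removeNth) : ℝ)) ≤
      ((d + 1 : ℕ) : ℝ) * (A.dens * (N : ℝ) ^ d) + #(edgeBoundary A) := by
    refine le_of_mul_le_mul_left ?_ hNpos
    calc (N : ℝ) * ∑ i : Fin (d + 1), (#(A.image i.removeNth) : ℝ)
        ≤ ((d + 1 : ℕ) : ℝ) * #A + N * #(edgeBoundary A) := by
          exact_mod_cast mul_sum_card_image_removeNth_le A
      _ = _ := by rw [hcard]; ring
  rw [le_div_iff₀ (by positivity)]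
  linarith

end Grid

lemma half_rpow_le_mul_rpow_sub {v D : ℝ} (hv : 0 ≤ v) (hv_half : v ≤ 1 / 2) (hD : 1 ≤ D) :
    v ^ (1 - 1 / D) / 2 ≤ D * (v ^ (1 - 1 / D) - v) := by
  have hDpos : 0 < D := by linarith
  have hD_inv : 1 / D ≤ 1 := (div_le_one hDpos).2 hD
  have hbernoulli : v ^ (1 / D) ≤ 1 - 1 / (2 * D) :=
    calc v ^ (1 / D) = (1 + (v - 1)) ^ (1 / D) := by rw [add_sub_cancel]
      _ ≤ 1 + 1 / D * (v - 1) :=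
          rpow_one_add_le_one_add_mul_self (by linarith) (by positivity) hD_inv
      _ ≤ 1 + 1 / D * (1 / 2 - 1) := by gcongr
      _ = 1 - 1 / (2 * D) := by field_simp; ring
  have hsplit : v = v ^ (1 - 1 / D) * v ^ (1 / D) := by
    rw [← Real.rpow_add_of_nonneg hv (by linarith) (by positivity), sub_add_cancel, Real.rpow_one]
  calc v ^ (1 - 1 / D) / 2
      = D * (v ^ (1 - 1 / D) - v ^ (1 - 1 / D) * (1 - 1 / (2 * D))) := by field_simp; ring
    _ ≤ D * (v ^ (1 - 1 / D) - v ^ (1 - 1 / D) * v ^ (1 / D)) := by gcongr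
    _ = D * (v ^ (1 - 1 / D) - v) := by rw [← hsplit]

theorem isoperimetric_medium_general {N d : ℕ} (hN : 0 < N) (hd : 2 ≤ d)
    (A : Finset (Fin d → Fin N)) (hA : (A.dens : ℝ) ≤ 1 / 2) :
    (A.dens : ℝ) ^ (1 - 1 / (d : ℝ)) ≤ 2 * (#(edgeBoundary A) / (N : ℝ) ^ (d - 1)) := by
  obtain ⟨m, rfl⟩ : ∃ m, d = m + 1 := ⟨d - 1, by omega⟩
  have hgap := half_rpow_le_mul_rpow_sub (D := ((m + 1 : ℕ) : ℝ)) (by positivity) hA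
    (by exact_mod_cast Nat.le_add_left 1 m)
  have hboundary := mul_dens_rpow_sub_dens_le hN (by omega) A
  rw [Nat.add_sub_cancel]
  linarith

lemma vol_eq_dens {n d : ℕ} (A : Finset (GridPt n d)) : Vol n d A = A.dens := by
  rw [cast_dens_eq_card_div_pow, Vol, pow_mul, Nat.cast_pow, Nat.cast_ofNat]

lemma bdry_eq_edgeBoundary {n d : ℕ} (A : Finset (GridPt n d)) : bdry n d A = edgeBoundary A := by
  ext e
  simp [bdry, edgePairs, edgeBoundary, directionalBoundary]

lemma mul_per_eq {n d : ℕ} (hd : d ≠ 0) (A : Finset (GridPt n d)) :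
    d * Per n d A = #(edgeBoundary A) / ((2 ^ n : ℕ) : ℝ) ^ (d - 1) := by
  rw [Per, bdry_eq_edgeBoundary, pow_mul, Nat.cast_pow, Nat.cast_ofNat]
  field_simp

/-- Isoperimetric inequality, medium sets: if `Vol(A) ≤ 1/2` then
`Vol(A)^{1-1/d} ≤ 2d·Per(A)`. -/
theorem isoperimetric_medium (n d : ℕ) (hn : 1 ≤ n) (hd : 3 ≤ d)
    (A : Finset (GridPt n d)) (hA : Vol n d A ≤ 1/2) :
    Vol n d A ^ ((1:ℝ) - 1/(d:ℝ)) ≤ 2 * (d:ℝ) * Per n d A := by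
  rw [vol_eq_dens] at hA ⊢
  rw [mul_assoc, mul_per_eq (by omega)]
  exact isoperimetric_medium_general (by positivity) (by omega) A hA
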